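/- arXiv:2506.07071 — 3 statements merged into one kernel-verified Lean document; each statement's English description precedes it below -/
import Mathlib

section
/- (Convolution formula for the Tutte polynomial of semimatroids.) Let (E,𝒞,r) be a semimatroid. Then, as an identity of polynomials in the two variables t and s, T(𝒞; t, s) = Σ_{X ∈ 𝒞} T(𝒞|X; 0, s) · T(𝒞/X; t, 0). -/
/-- A semimatroid on a finite ground set `E`: a nonempty, subset-closed collection `C`
of "central" subsets of `E`, together with a rank function `r` satisfying (SR1)-(SR5). -/
structure Semimatroid (E : Type*) [DecidableEq E] [Fintype E] where
  C : Finset (Finset E)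
  r : Finset E → ℕ
  C_nonempty : C.Nonempty
  mem_of_subset : ∀ ⦃X Y : Finset E⦄, X ∈ C → Y ⊆ X → Y ∈ C
  r_le_card : ∀ ⦃X : Finset E⦄, X ∈ C → r X ≤ X.card
  r_mono : ∀ ⦃X Y : Finset E⦄, X ∈ C → Y ∈ C → X ⊆ Y → r X ≤ r Y
  submodular : ∀ ⦃X Y : Finset E⦄, X ∈ C → Y ∈ C → X ∪ Y ∈ C →
    r (X ∩ Y) + r (X ∪ Y) ≤ r X + r Y
  union_mem : ∀ ⦃X Y : Finset E⦄, X ∈ C → Y ∈ C → r X = r (X ∩ Y) → X ∪ Y ∈ C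
  augment : ∀ ⦃X Y : Finset E⦄, X ∈ C → Y ∈ C → r X < r Y →
    ∃ e ∈ Y \ X, insert e X ∈ C

namespace Semimatroid

variable {E : Type*} [DecidableEq E] [Fintype E] (S : Semimatroid E)

/-- The rank `r(𝒞)` of the semimatroid: the common rank of the maximal central sets. -/
def rank : ℕ := S.C.sup S.r

/-- The closure of a central set `X`:
`cl X = {e ∈ E : X ∪ {e} ∈ 𝒞 and r (X ∪ {e}) = r X}`. -/
def cl (X : Finset E) : Finset E :=
  Finset.univ.filter fun e => insert e X ∈ S.C ∧ S.r (insert e X) = S.r X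

/-- The flats of the semimatroid: central sets `X` with `cl X = X`. -/
def flats : Finset (Finset E) := S.C.filter fun X => S.cl X = X

/-- The characteristic polynomial `χ(𝒞;t) = Σ_{X ∈ 𝒞} (−1)^{|X|} t^{r(𝒞)−r(X)}`. -/
noncomputable def charPoly : Polynomial ℤ :=
  ∑ A ∈ S.C, (-1 : Polynomial ℤ) ^ A.card * Polynomial.X ^ (S.rank - S.r A)

end Semimatroid

namespace Semimatroid

variable {E : Type*} [DecidableEq E] [Fintype E] (S : Semimatroid E)

/-- The Tutte polynomial of `𝒞` evaluated at `(t,s)`: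
`T(𝒞;t,s) = Σ_{A ∈ 𝒞} (t−1)^{r(𝒞)−r(A)} (s−1)^{|A|−r(A)}`. -/
def tutteEval (t s : ℤ) : ℤ :=
  ∑ A ∈ S.C, (t - 1) ^ (S.rank - S.r A) * (s - 1) ^ (A.card - S.r A)

/-- The central sets of the restriction `𝒞|X`: `{Y ⊆ X : Y ∈ 𝒞}`. -/
def restCentrals (X : Finset E) : Finset (Finset E) := S.C.filter fun Y => Y ⊆ X

/-- The rank of the restriction `𝒞|X`. -/
def restRank (X : Finset E) : ℕ := (S.restCentrals X).sup S.r

/-- The Tutte polynomial of the restriction `𝒞|X`, evaluated at `(t,s)`. -/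
def restTutteEval (X : Finset E) (t s : ℤ) : ℤ :=
  ∑ Y ∈ S.restCentrals X,
    (t - 1) ^ (S.restRank X - S.r Y) * (s - 1) ^ (Y.card - S.r Y)

/-- The central sets of the contraction `𝒞/X`: `{Y ⊆ E \ X : Y ∪ X ∈ 𝒞}`. -/
def contrCentrals (X : Finset E) : Finset (Finset E) :=
  (Finset.univ \ X).powerset.filter fun Y => Y ∪ X ∈ S.C

/-- The rank of the contraction `𝒞/X`, whose rank function is `Y ↦ r(Y ∪ X) − r(X)`. -/
def contrRank (X : Finset E) : ℕ :=
  (S.contrCentrals X).sup fun Y => S.r (Y ∪ X) - S.r X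

/-- The Tutte polynomial of the contraction `𝒞/X`, evaluated at `(t,s)`. -/
def contrTutteEval (X : Finset E) (t s : ℤ) : ℤ :=
  ∑ Y ∈ S.contrCentrals X,
    (t - 1) ^ (S.contrRank X - (S.r (Y ∪ X) - S.r X)) *
      (s - 1) ^ (Y.card - (S.r (Y ∪ X) - S.r X))

end Semimatroid

/-!
Taking alternating sums over subsets inverts summation over subsets: if `F X = ∑ Y ⊆ X, f Y`, then
`∑ X ⊆ Z, (-1)^|X| F X = (-1)^|Z| f Z`. Multiplying by `g Z` and summing over the central sets `Z`
gives, for `G X = ∑ Z ⊇ X, g Z`, the identity `∑ X, (-1)^|X| F X G X = ∑ X, (-1)^|X| f X g X`.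
The Tutte polynomials of the restriction to `X` at `(0, s)` and the contraction by `X` at `(t, 0)`
are such sums `F X` and `G X` up to the signs `(-1)^r(X)` and `(-1)^(|X| - r(X))`, whose product is
`(-1)^|X|`.
-/

open Finset

section AlternatingSums

variable {α : Type*}

lemma sum_powerset_neg_one_pow_card_smul_sum_powerset {M : Type*} [AddCommGroup M]
    (f : Finset α → M) (Z : Finset α) :
    ∑ X ∈ Z.powerset, (-1 : ℤ) ^ #X • ∑ Y ∈ X.powerset, f Y = (-1 : ℤ) ^ #Z • f Z := by
  classical
  induction Z using Finset.induction_on generalizing f with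
  | empty => simp
  | insert a Z ha ih =>
    have sum_insert_subsets : ∀ X ∈ Z.powerset,
        (-1 : ℤ) ^ #(insert a X) • ∑ Y ∈ (insert a X).powerset, f Y =
          -((-1 : ℤ) ^ #X • ∑ Y ∈ X.powerset, f Y) -
            (-1 : ℤ) ^ #X • ∑ Y ∈ X.powerset, f (insert a Y) := by
      intro X hX
      have haX : a ∉ X := fun h ↦ ha (mem_powerset.mp hX h)
      rw [card_insert_of_notMem haX, sum_powerset_insert haX, pow_succ, mul_neg_one, neg_smul,
        smul_add, neg_add, sub_eq_add_neg]
    rw [sum_powerset_insert ha, sum_congr rfl sum_insert_subsets, sum_sub_distrib,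
      sum_neg_distrib, ih fun Y ↦ f (insert a Y), card_insert_of_notMem ha, pow_succ, mul_neg_one,
      neg_smul]
    abel

lemma sum_neg_one_pow_card_smul_sum_subsets_mul_sum_supersets [DecidableEq α] {R : Type*}
    [NonUnitalNonAssocRing R] {C : Finset (Finset α)} (hC : IsLowerSet (C : Set (Finset α)))
    (f g : Finset α → R) :
    ∑ X ∈ C, (-1 : ℤ) ^ #X • ((∑ Y ∈ X.powerset, f Y) * ∑ Z ∈ C with X ⊆ Z, g Z) =
      ∑ X ∈ C, (-1 : ℤ) ^ #X • (f X * g X) :=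
  calc
    _ = ∑ X ∈ C, ∑ Z ∈ C with X ⊆ Z, ((-1 : ℤ) ^ #X • ∑ Y ∈ X.powerset, f Y) * g Z := by
      simp only [← smul_sum, ← mul_sum, smul_mul_assoc]
    _ = ∑ Z ∈ C, ∑ X ∈ Z.powerset, ((-1 : ℤ) ^ #X • ∑ Y ∈ X.powerset, f Y) * g Z := by
      refine sum_comm' fun X Z ↦ ?_
      rw [mem_filter, mem_powerset]
      exact ⟨fun ⟨_, hZ, hXZ⟩ ↦ ⟨hXZ, hZ⟩, fun ⟨hXZ, hZ⟩ ↦ ⟨hC hXZ hZ, hZ, hXZ⟩⟩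
    _ = _ := by
      simp only [← smul_mul_assoc, ← sum_mul, sum_powerset_neg_one_pow_card_smul_sum_powerset]

lemma neg_one_pow_sub {R : Type*} [Monoid R] [HasDistribNeg R] {m n : ℕ} (h : m ≤ n) :
    (-1 : R) ^ (n - m) = (-1) ^ m * (-1) ^ n := by
  rw [← pow_add]
  exact neg_one_pow_congr (by grind)

end AlternatingSums

namespace Semimatroid

variable {E : Type*} [DecidableEq E] [Fintype E] (S : Semimatroid E)

/-- The nullity `|X| - r(X)` of a central set `X`, the exponent of `s - 1` in the Tutte
polynomial. The subtraction is truncated, which is harmless as `r(X) ≤ |X|` for central `X`. -/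
def nullity (X : Finset E) : ℕ := #X - S.r X

variable {S} {X Z : Finset E}

lemma isLowerSet_C : IsLowerSet (S.C : Set (Finset E)) :=
  fun _ _ hYX hX ↦ S.mem_of_subset hX hYX

lemma r_le_rank (hX : X ∈ S.C) : S.r X ≤ S.rank :=
  le_sup (f := S.r) hX

lemma r_add_nullity (hX : X ∈ S.C) : S.r X + S.nullity X = #X :=
  Nat.add_sub_of_le (S.r_le_card hX)

lemma r_le_r_add_card_sdiff (hZ : Z ∈ S.C) (hXZ : X ⊆ Z) : S.r Z ≤ S.r X + #(Z \ X) := by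
  have hX : X ∈ S.C := S.mem_of_subset hZ hXZ
  have hdiff : Z \ X ∈ S.C := S.mem_of_subset hZ sdiff_subset
  have hunion : X ∪ Z \ X = Z := union_sdiff_of_subset hXZ
  calc
    S.r Z = S.r (X ∪ Z \ X) := by rw [hunion]
    _ ≤ S.r (X ∩ (Z \ X)) + S.r (X ∪ Z \ X) := Nat.le_add_left _ _
    _ ≤ S.r X + S.r (Z \ X) := S.submodular hX hdiff (by rwa [hunion])
    _ ≤ S.r X + #(Z \ X) := Nat.add_le_add_left (S.r_le_card hdiff) _

lemma nullity_mono (hZ : Z ∈ S.C) (hXZ : X ⊆ Z) : S.nullity X ≤ S.nullity Z := by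
  have hrank := r_le_r_add_card_sdiff hZ hXZ
  have hcard := card_sdiff_add_card_eq_card hXZ
  unfold nullity
  omega

lemma card_sdiff_sub_r_sub_r (hZ : Z ∈ S.C) (hXZ : X ⊆ Z) :
    #(Z \ X) - (S.r Z - S.r X) = S.nullity Z - S.nullity X := by
  have hX := S.mem_of_subset hZ hXZ
  have hmono := S.r_mono hX hZ hXZ
  have hrX := S.r_le_card hX
  have hcard := card_sdiff_add_card_eq_card hXZ
  unfold nullity
  omega

lemma exists_superset_r_eq_rank (hX : X ∈ S.C) : ∃ Z ∈ S.C, X ⊆ Z ∧ S.r Z = S.rank := by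
  obtain ⟨Z, hXZ, hZ⟩ := exists_le_maximal S.C hX
  refine ⟨Z, hZ.prop, hXZ, (r_le_rank hZ.prop).antisymm (Finset.sup_le fun W hW ↦ ?_)⟩
  by_contra! hlt
  obtain ⟨e, he, heZ⟩ := S.augment hZ.prop hW hlt
  exact (mem_sdiff.mp he).2 (hZ.le_of_ge heZ (subset_insert e Z) (mem_insert_self e Z))

lemma restCentrals_eq_powerset (hX : X ∈ S.C) : S.restCentrals X = X.powerset := by
  ext Y
  simp only [restCentrals, mem_filter, mem_powerset, and_iff_right_iff_imp]
  exact S.mem_of_subset hX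

lemma restRank_eq_r (hX : X ∈ S.C) : S.restRank X = S.r X := by
  rw [restRank, restCentrals_eq_powerset hX]
  refine le_antisymm (Finset.sup_le fun Y hY ↦ ?_) (le_sup (mem_powerset_self X))
  have hYX := mem_powerset.mp hY
  exact S.r_mono (S.mem_of_subset hX hYX) hX hYX

lemma contrCentrals_eq_image (X : Finset E) :
    S.contrCentrals X = {Z ∈ S.C | X ⊆ Z}.image (· \ X) := by
  ext Y
  simp only [contrCentrals, mem_filter, mem_powerset, mem_image]
  constructor
  · rintro ⟨hY, hYX⟩
    refine ⟨Y ∪ X, ⟨hYX, subset_union_right⟩, union_sdiff_cancel_right ?_⟩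
    exact disjoint_of_subset_left hY sdiff_disjoint
  · rintro ⟨Z, ⟨hZ, hXZ⟩, rfl⟩
    exact ⟨sdiff_subset_sdiff (subset_univ Z) le_rfl, by rwa [sdiff_union_of_subset hXZ]⟩

lemma sum_contrCentrals {M : Type*} [AddCommMonoid M] (X : Finset E) (f : Finset E → M) :
    ∑ Y ∈ S.contrCentrals X, f Y = ∑ Z ∈ S.C with X ⊆ Z, f (Z \ X) := by
  rw [contrCentrals_eq_image, sum_image]
  intro Z hZ W hW hZW
  simp only [coe_filter, Set.mem_ofPred_eq] at hZ hW hZW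
  rw [← sdiff_union_of_subset hZ.2, hZW, sdiff_union_of_subset hW.2]

lemma contrRank_eq_rank_sub_r (hX : X ∈ S.C) : S.contrRank X = S.rank - S.r X := by
  apply le_antisymm
  · refine Finset.sup_le fun Y hY ↦ ?_
    exact Nat.sub_le_sub_right (r_le_rank (mem_filter.mp hY).2) _
  · obtain ⟨Z, hZ, hXZ, hr⟩ := exists_superset_r_eq_rank hX
    have hmem : Z \ X ∈ S.contrCentrals X := by
      rw [contrCentrals_eq_image]
      exact mem_image_of_mem _ (mem_filter.mpr ⟨hZ, hXZ⟩)
    calc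
      S.rank - S.r X = S.r (Z \ X ∪ X) - S.r X := by rw [sdiff_union_of_subset hXZ, hr]
      _ ≤ S.contrRank X := le_sup (f := fun Y ↦ S.r (Y ∪ X) - S.r X) hmem

lemma restTutteEval_zero_left (hX : X ∈ S.C) (s : ℤ) :
    S.restTutteEval X 0 s =
      (-1) ^ S.r X * ∑ Y ∈ X.powerset, (-1) ^ S.r Y * (s - 1) ^ S.nullity Y := by
  rw [restTutteEval, restCentrals_eq_powerset hX, restRank_eq_r hX, mul_sum]
  refine sum_congr rfl fun Y hY ↦ ?_
  have hYX := mem_powerset.mp hY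
  rw [zero_sub, neg_one_pow_sub (S.r_mono (S.mem_of_subset hX hYX) hX hYX), nullity]
  ring

lemma contrTutteEval_zero_right (hX : X ∈ S.C) (t : ℤ) :
    S.contrTutteEval X t 0 =
      (-1) ^ S.nullity X *
        ∑ Z ∈ S.C with X ⊆ Z, (t - 1) ^ (S.rank - S.r Z) * (-1) ^ S.nullity Z := by
  rw [contrTutteEval, sum_contrCentrals, contrRank_eq_rank_sub_r hX, mul_sum]
  refine sum_congr rfl fun Z hZ ↦ ?_
  obtain ⟨hZ, hXZ⟩ := mem_filter.mp hZ
  rw [sdiff_union_of_subset hXZ, tsub_tsub_tsub_cancel_right (S.r_mono hX hZ hXZ), zero_sub,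
    card_sdiff_sub_r_sub_r hZ hXZ, neg_one_pow_sub (nullity_mono hZ hXZ)]
  ring

end Semimatroid

/-- **convolution formula for the Tutte polynomial.** For a semimatroid `𝒞`,
as an identity in the two variables `t` and `s`,
`T(𝒞;t,s) = Σ_{X ∈ 𝒞} T(𝒞|X;0,s) ⋅ T(𝒞/X;t,0)`. -/
theorem Semimatroid.tutte_convolution
    {E : Type*} [DecidableEq E] [Fintype E] (S : Semimatroid E) :
    ∀ t s : ℤ,
      S.tutteEval t s = ∑ X ∈ S.C, S.restTutteEval X 0 s * S.contrTutteEval X t 0 := by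
  intro t s
  let f (Y : Finset E) : ℤ := (-1) ^ S.r Y * (s - 1) ^ S.nullity Y
  let g (Z : Finset E) : ℤ := (t - 1) ^ (S.rank - S.r Z) * (-1) ^ S.nullity Z
  calc
    S.tutteEval t s = ∑ X ∈ S.C, (-1 : ℤ) ^ #X • (f X * g X) := by
      refine sum_congr rfl fun X hX ↦ ?_
      have hsign : (-1 : ℤ) ^ #X * ((-1) ^ S.r X * (-1) ^ S.nullity X) = 1 := by
        rw [← pow_add, Semimatroid.r_add_nullity hX, ← mul_pow, neg_one_mul, neg_neg, one_pow]
      simp only [f, g, smul_eq_mul, Semimatroid.nullity] at hsign ⊢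
      linear_combination -((t - 1) ^ (S.rank - S.r X) * (s - 1) ^ (#X - S.r X)) * hsign
    _ = ∑ X ∈ S.C, (-1 : ℤ) ^ #X • ((∑ Y ∈ X.powerset, f Y) * ∑ Z ∈ S.C with X ⊆ Z, g Z) :=
      (sum_neg_one_pow_card_smul_sum_subsets_mul_sum_supersets Semimatroid.isLowerSet_C f g).symm
    _ = ∑ X ∈ S.C, S.restTutteEval X 0 s * S.contrTutteEval X t 0 := by
      refine sum_congr rfl fun X hX ↦ ?_
      rw [Semimatroid.restTutteEval_zero_left hX, Semimatroid.contrTutteEval_zero_right hX,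
        smul_eq_mul, ← Semimatroid.r_add_nullity hX, pow_add, mul_mul_mul_comm]
end

section
/- Let F be a field, n a positive integer, C a finite nonempty index set, and (α_e)_{e∈C} a family of vectors in F^n that is linearly dependent while every proper subfamily is linearly independent. Let (c_e)_{e∈C} be scalars in F with Σ_{e∈C} c_e α_e = 0 and c_e ≠ 0 for all e ∈ C. Then for every family (a_e)_{e∈C} of scalars in F, the family of vectors ((α_e, a_e))_{e∈C} in F^n × F is linearly dependent with every proper subfamily linearly independent if and only if Σ_{e∈C} c_e a_e = 0; moreover, if Σ_{e∈C} c_e a_e ≠ 0 then the whole family ((α_e, a_e))_{e∈C} is linearly independent. -/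
/-!
The linear relations of a circuit form a line, spanned by `c`. Projecting to the first factor, every
relation of the lifted family `(α_e, a_e)` is therefore of the form `t • c`, and `t • c` is a
relation of the lifted family exactly when `t * ∑ c_e a_e = 0`. Proper subfamilies stay independent
because they are already independent after projection.
-/

open Finsupp (linearCombination)

section LinearRelations

variable {ι K V W : Type*}

theorem eq_zero_of_linearCombination_eq_zero_of_apply_eq_zero [Semiring K] [AddCommMonoid V]
    [Module K V] {v : ι → V} {i : ι} (hv : LinearIndepOn K v {i}ᶜ) {g : ι →₀ K}
    (hg : linearCombination K v g = 0) (hgi : g i = 0) : g = 0 := by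
  have hsupp : g ∈ Finsupp.supported K K {i}ᶜ := by
    simpa [Finsupp.mem_supported] using hgi
  exact linearIndepOn_iffₛ.1 hv g hsupp 0 (zero_mem _) (by simpa using hg)

variable [DivisionRing K] [AddCommGroup V] [Module K V] [AddCommGroup W] [Module K W]

theorem exists_smul_eq_of_linearCombination_eq_zero {v : ι → V} {i : ι}
    (hv : LinearIndepOn K v {i}ᶜ) {c g : ι →₀ K} (hc₀ : c ≠ 0)
    (hc : linearCombination K v c = 0) (hg : linearCombination K v g = 0) :
    ∃ t : K, g = t • c := by
  have hci : c i ≠ 0 := mt (eq_zero_of_linearCombination_eq_zero_of_apply_eq_zero hv hc) hc₀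
  refine ⟨g i * (c i)⁻¹, sub_eq_zero.1 ?_⟩
  apply eq_zero_of_linearCombination_eq_zero_of_apply_eq_zero hv
  · simp [hc, hg]
  · simp [hci]

theorem linearIndependent_of_linearCombination_ne_zero (f : V →ₗ[K] W) {u : ι → V} {i : ι}
    (hu : LinearIndepOn K (f ∘ u) {i}ᶜ) {c : ι →₀ K} (hfc : f (linearCombination K u c) = 0)
    (hc : linearCombination K u c ≠ 0) : LinearIndependent K u := by
  refine linearIndependent_iff.2 fun g hg ↦ ?_
  have hc₀ : c ≠ 0 := by
    rintro rfl
    simp at hc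
  obtain ⟨t, rfl⟩ : ∃ t : K, g = t • c := by
    apply exists_smul_eq_of_linearCombination_eq_zero hu hc₀
    · rw [← Finsupp.apply_linearCombination, hfc]
    · rw [← Finsupp.apply_linearCombination, hg, map_zero]
  have ht : t = 0 := by simpa [hc] using hg
  rw [ht, zero_smul]

end LinearRelations

/-- A family of vectors is a linear circuit if it is a circuit of the matroid it represents: it is
linearly dependent, but all its proper subfamilies are linearly independent. This is a property of
the indexed family, so that repeated vectors count as dependent. -/
def IsLinearCircuit {ι : Type*} (K : Type*) {V : Type*} [Semiring K] [AddCommMonoid V] [Module K V]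
    (v : ι → V) : Prop :=
  ¬LinearIndependent K v ∧ ∀ s : Set ι, s ≠ Set.univ → LinearIndepOn K v s

namespace IsLinearCircuit

variable {ι K V W : Type*}

theorem iff_not_linearIndependent [Semiring K] [AddCommMonoid V] [Module K V] [AddCommMonoid W]
    [Module K W] (f : V →ₗ[K] W) {u : ι → V} (hfu : IsLinearCircuit K (f ∘ u)) :
    IsLinearCircuit K u ↔ ¬LinearIndependent K u :=
  ⟨And.left, fun hu ↦ ⟨hu, fun s hs ↦ (hfu.2 s hs).of_comp f⟩⟩

variable [DivisionRing K] [AddCommGroup V] [Module K V] [AddCommGroup W] [Module K W]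

theorem linearIndependent_iff_linearCombination_ne_zero (f : V →ₗ[K] W) {u : ι → V}
    (hfu : IsLinearCircuit K (f ∘ u)) {c : ι →₀ K} (hc : c ≠ 0)
    (hfc : f (linearCombination K u c) = 0) :
    LinearIndependent K u ↔ linearCombination K u c ≠ 0 := by
  refine ⟨fun hu h ↦ hc (linearIndependent_iff.1 hu c h), fun h ↦ ?_⟩
  obtain ⟨i, -⟩ := Finsupp.ne_iff.1 hc
  have hi : ({i}ᶜ : Set ι) ≠ Set.univ := by simp
  exact linearIndependent_of_linearCombination_ne_zero f (hfu.2 _ hi) hfc h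

end IsLinearCircuit

theorem affine_circuit_iff_discriminantal_general {ι K V W : Type*} [Fintype ι] [DivisionRing K]
    [AddCommGroup V] [Module K V] [AddCommGroup W] [Module K W] {v : ι → V}
    (hv : IsLinearCircuit K v) {c : ι → K} (hc : c ≠ 0) (hsum : ∑ i, c i • v i = 0) (w : ι → W) :
    (IsLinearCircuit K (fun i ↦ (v i, w i)) ↔ ∑ i, c i • w i = 0) ∧
      (∑ i, c i • w i ≠ 0 → LinearIndependent K (fun i ↦ (v i, w i))) := by
  let u : ι → V × W := fun i ↦ (v i, w i)
  let c' : ι →₀ K := Finsupp.equivFunOnFinite.symm c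
  have hc' : c' ≠ 0 := fun h ↦ hc (congrArg DFunLike.coe h)
  have hu : linearCombination K u c' = (0, ∑ i, c i • w i) := by
    simp [u, c', Finsupp.linearCombination_apply, Finsupp.sum_fintype, Prod.ext_iff, Prod.fst_sum,
      Prod.snd_sum, hsum]
  have hfst : LinearMap.fst K V W (linearCombination K u c') = 0 := by simp [hu]
  have hindep : LinearIndependent K u ↔ ∑ i, c i • w i ≠ 0 := by
    simpa [hu] using hv.linearIndependent_iff_linearCombination_ne_zero _ hc' hfst
  have hcircuit : IsLinearCircuit K u ↔ ¬LinearIndependent K u :=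
    IsLinearCircuit.iff_not_linearIndependent (LinearMap.fst K V W) hv
  exact ⟨hcircuit.trans (not_iff_comm.1 hindep.symm), hindep.2⟩

/-- Let `(α_e)_{e ∈ C}` be a circuit of vectors in `F^n` (linearly
dependent, every proper subfamily independent), with circuit vector `(c_e)` satisfying
`Σ c_e α_e = 0` and `c_e ≠ 0` for all `e`. Then for scalars `(a_e)`, the family
`((α_e, a_e))_{e ∈ C}` in `F^n × F` is dependent with every proper subfamily independent
iff `Σ c_e a_e = 0`; and if `Σ c_e a_e ≠ 0` then `((α_e, a_e))_{e ∈ C}` is independent. -/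
theorem affine_circuit_iff_discriminantal
    (F : Type*) [Field F] (n : ℕ) (hn : 0 < n)
    (C : Type*) [Fintype C] [Nonempty C]
    (α : C → (Fin n → F))
    (hdep : ¬ LinearIndependent F α)
    (hmin : ∀ s : Set C, s ≠ Set.univ → LinearIndependent F (fun e : s => α e.1))
    (c : C → F) (hc : ∀ e, c e ≠ 0) (hsum : ∑ e, c e • α e = 0)
    (a : C → F) :
    ((¬ LinearIndependent F (fun e => (α e, a e)) ∧
        ∀ s : Set C, s ≠ Set.univ →
          LinearIndependent F (fun e : s => (α e.1, a e.1))) ↔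
      ∑ e, c e * a e = 0) ∧
    (∑ e, c e * a e ≠ 0 → LinearIndependent F (fun e => (α e, a e))) :=
  affine_circuit_iff_discriminantal_general ⟨hdep, hmin⟩
    (Function.ne_iff.2 ⟨Classical.arbitrary C, hc _⟩) hsum a
end

section
/- Let F be a field, E a finite set, n a positive integer, and (α_e)_{e∈E} vectors in F^n. For a : E → F, call a subset X ⊆ E a-central if there exists x ∈ F^n with ⟨α_e, x⟩ = a(e) for all e ∈ X, and define χ(𝒜_a;t) = Σ_{X a-central} (−1)^{|X|} t^{n − dim span{(α_e, a(e)) : e ∈ X}}; write w_i(𝒜_a) = (−1)^i · (coefficient of t^{n−i} in χ(𝒜_a;t)). Let a, a' : E → F. If every a'-central subset of E is also a-central, then w_i(𝒜_a) ≤ w_i(𝒜_{a'}) for every 0 ≤ i ≤ dim span{α_e : e ∈ E}. -/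
open scoped Classical

/-- `X ⊆ E` is a central subset of the affine arrangement
`𝒜_a = {x : ⟨α_e, x⟩ = a(e)}_{e ∈ E}`: the hyperplanes indexed by `X` have a common point. -/
def ACentral {F : Type*} [Field F] {E : Type*} {n : ℕ}
    (α : E → (Fin n → F)) (a : E → F) (X : Finset E) : Prop :=
  ∃ x : Fin n → F, ∀ e ∈ X, (∑ i, α e i * x i) = a e

/-- The characteristic polynomial of the affine arrangement `𝒜_a`:
`χ(𝒜_a;t) = Σ_{X a-central} (−1)^{|X|} t^{n − dim span{(α_e, a(e)) : e ∈ X}}`. -/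
noncomputable def arrCharPoly {F : Type*} [Field F] {E : Type*} [Fintype E] {n : ℕ}
    (α : E → (Fin n → F)) (a : E → F) : Polynomial ℤ :=
  ∑ X ∈ (Finset.univ : Finset E).powerset.filter (fun X => ACentral α a X),
    (-1 : Polynomial ℤ) ^ X.card *
      Polynomial.X ^
        (n - Module.finrank F
          (Submodule.span F ((fun e => (α e, a e)) '' (X : Set E))))

/-- The `i`-th unsigned Whitney number of the first kind of the arrangement `𝒜_a`:
`w_i(𝒜_a) = (−1)^i ⋅ (coefficient of t^{n−i} in χ(𝒜_a;t))`. -/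
noncomputable def arrWhitney {F : Type*} [Field F] {E : Type*} [Fintype E] {n : ℕ}
    (α : E → (Fin n → F)) (a : E → F) (i : ℕ) : ℤ :=
  (-1 : ℤ) ^ i * (arrCharPoly α a).coeff (n - i)

/-!
Fix a linear order on `E`. Whitney's broken circuit theorem for the vectors `(α_e, a(e))` turns
`w_i(𝒜_a)` into the number of central `i`-subsets containing no broken circuit: toggling the
largest element that would close a circuit cancels all other terms. Such sets are linearly
independent, and independent sets are central for every `a`. Hence `a` enters only through the
circuits that are themselves central: the fewer of them there are, the fewer broken circuits have
to be avoided.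
-/

section BrokenCircuit

open scoped symmDiff

section Semiring

variable {R E V M : Type*} [Semiring R] [AddCommMonoid V] [Module R V]

variable (R) in
/-- `e` is active over `X` if `v e` is spanned by those vectors of `X` whose index exceeds `e`;
over a field this says that `e` is the least element of a circuit whose other elements, the
corresponding broken circuit, all lie in `X`. The element `e` itself may or may not be in `X`. -/
def IsActive [Preorder E] (v : E → V) (X : Set E) (e : E) : Prop :=
  v e ∈ Submodule.span R (v '' (X ∩ Set.Ioi e))

variable (R) in
/-- No-broken-circuit sets of the vector configuration `v`: the sets over which no element is
active. -/
def IsNBC [Preorder E] (v : E → V) (X : Set E) : Prop :=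
  ∀ e, ¬ IsActive R v X e

section Preorder

variable [Preorder E] {v : E → V} {X Y : Set E} {e f : E}

lemma IsActive.mono (h : X ⊆ Y) (he : IsActive R v X e) : IsActive R v Y e :=
  Submodule.span_mono (Set.image_mono (Set.inter_subset_inter_left _ h)) he

lemma IsNBC.mono (h : X ⊆ Y) (hY : IsNBC R v Y) : IsNBC R v X :=
  fun e he => hY e (he.mono h)

lemma isActive_symmDiff_singleton (h : e ≤ f) :
    IsActive R v (X ∆ {e}) f ↔ IsActive R v X f := by
  have : X ∆ {e} ∩ Set.Ioi f = X ∩ Set.Ioi f := by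
    ext g
    simp only [Set.mem_inter_iff, Set.mem_symmDiff, Set.mem_singleton_iff, Set.mem_Ioi]
    have : f < g → g ≠ e := fun hfg hge => (h.trans_lt hfg).ne' hge
    tauto
  rw [IsActive, IsActive, this]

lemma IsActive.span_symmDiff_singleton_le (he : IsActive R v X e) :
    Submodule.span R (v '' (X ∆ {e})) ≤ Submodule.span R (v '' X) := by
  have he' : v e ∈ Submodule.span R (v '' X) :=
    Submodule.span_mono (Set.image_mono Set.inter_subset_left) he
  rw [← Submodule.span_insert_eq_span he', ← Set.image_insert_eq, ← Set.union_singleton]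
  exact Submodule.span_mono (Set.image_mono symmDiff_le_sup)

lemma IsActive.span_symmDiff_singleton (he : IsActive R v X e) :
    Submodule.span R (v '' (X ∆ {e})) = Submodule.span R (v '' X) := by
  refine he.span_symmDiff_singleton_le.antisymm ?_
  have he' : IsActive R v (X ∆ {e}) e := (isActive_symmDiff_singleton le_rfl).2 he
  simpa only [symmDiff_symmDiff_cancel_right] using he'.span_symmDiff_singleton_le

end Preorder

variable [LinearOrder E] {v : E → V}

lemma isGreatest_isActive_symmDiff_singleton {X : Set E} {e : E}
    (he : IsGreatest {f | IsActive R v X f} e) :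
    IsGreatest {f | IsActive R v (X ∆ {e}) f} e := by
  refine ⟨(isActive_symmDiff_singleton le_rfl).2 he.1, fun f hf => ?_⟩
  by_contra! hef
  exact hef.not_ge (he.2 ((isActive_symmDiff_singleton hef.le).1 hf))

lemma exists_isGreatest_isActive [Finite E] {X : Set E} (hX : ¬ IsNBC R v X) :
    ∃ e, IsGreatest {f | IsActive R v X f} e := by
  simp only [IsNBC, not_forall, not_not] at hX
  exact Set.exists_max_image _ id (Set.toFinite _) hX

/-- Terms over sets that are not NBC cancel in pairs, by toggling the greatest active element. -/
theorem sum_eq_sum_isNBC [Fintype E] [AddCommGroup M] (g : Finset E → M)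
    (hg : ∀ (X : Finset E) (e : E), IsActive R v X e → g (X ∆ {e}) = -g X) :
    ∑ X, g X = ∑ X ∈ {X : Finset E | IsNBC R v (X : Set E)}, g X := by
  rw [← Finset.sum_filter_add_sum_filter_not Finset.univ fun X : Finset E => IsNBC R v (X : Set E),
    add_eq_left]
  have exists_greatest : ∀ X ∈ Finset.univ.filter fun X : Finset E => ¬ IsNBC R v (X : Set E),
      ∃ e, IsGreatest {f | IsActive R v X f} e :=
    fun X hX => exists_isGreatest_isActive ((Finset.mem_filter_univ X).1 hX)
  choose m hm using exists_greatest
  have hm' X hX : IsGreatest {f | IsActive R v (X ∆ {m X hX} : Finset E) f} (m X hX) := by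
    rw [Finset.coe_symmDiff, Finset.coe_singleton]
    exact isGreatest_isActive_symmDiff_singleton (hm X hX)
  refine Finset.sum_involution (fun X hX => X ∆ {m X hX}) ?_ ?_ ?_ ?_
  · intro X hX
    rw [hg X _ (hm X hX).1, add_neg_cancel]
  · intro X hX _ hfix
    exact Finset.singleton_ne_empty _ (symmDiff_eq_left.1 hfix)
  · intro X hX
    exact (Finset.mem_filter_univ _).2 fun hnbc => hnbc _ (hm' X hX).1
  · intro X hX
    rw [(hm _ _).unique (hm' X hX), symmDiff_symmDiff_cancel_right]

end Semiring

lemma neg_one_pow_card_symmDiff_singleton {E R : Type*} [DecidableEq E] [Ring R] (X : Finset E)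
    (e : E) : (-1 : R) ^ (X ∆ {e}).card = -(-1) ^ X.card := by
  by_cases he : e ∈ X
  · have : X ∆ {e} = X.erase e := by ext f; by_cases hf : f = e <;> simp_all [Finset.mem_symmDiff]
    rw [this, ← Finset.card_erase_add_one he, pow_succ, mul_neg_one, neg_neg]
  · have : X ∆ {e} = insert e X := by ext f; by_cases hf : f = e <;> simp_all [Finset.mem_symmDiff]
    rw [this, Finset.card_insert_of_notMem he, pow_succ, mul_neg_one]

lemma IsNBC.linearIndepOn {K E V : Type*} [DivisionRing K] [AddCommGroup V] [Module K V]
    [LinearOrder E] {v : E → V} {X : Set E} (hX : IsNBC K v X) : LinearIndepOn K v X := by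
  refine linearIndepOn_of_finite X fun Y hYX hY => ?_
  lift Y to Finset E using hY
  replace hX := hX.mono hYX
  clear hYX
  induction Y using Finset.induction_on_min with
  | empty => simp
  | insert e Y hlt ih =>
    have he : e ∉ (Y : Set E) := fun he => (hlt e he).false
    rw [Finset.coe_insert] at hX ⊢
    refine (linearIndepOn_insert he).2 ⟨ih (hX.mono (Set.subset_insert e _)), fun hspan => hX e ?_⟩
    have hsub : (Y : Set E) ⊆ insert e ↑Y ∩ Set.Ioi e := fun f hf => ⟨Or.inr hf, hlt f hf⟩
    exact Submodule.span_mono (Set.image_mono hsub) hspan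

end BrokenCircuit

lemma finrank_span_image_eq_card {R E V : Type*} [Ring R] [StrongRankCondition R] [AddCommGroup V]
    [Module R V] {v : E → V} {X : Finset E} (hX : LinearIndepOn R v (X : Set E)) :
    Module.finrank R (Submodule.span R (v '' (X : Set E))) = X.card := by
  have := nontrivial_of_invariantBasisNumber R
  rw [Set.image_eq_range, finrank_span_eq_card hX]
  simp

section Central

variable {R E V : Type*} [CommSemiring R] [AddCommMonoid V] [Module R V]

/-- Central subsets of the arrangement `{φ : φ (α e) = a e}` of affine hyperplanes in the dual
of `V`. For `V = F^n` the dual is identified with `F^n` by the standard pairing. -/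
def IsCentralOn (α : E → V) (a : E → R) (X : Set E) : Prop :=
  ∃ φ : Module.Dual R V, ∀ e ∈ X, φ (α e) = a e

variable {α : E → V} {a : E → R} {X Y : Set E} {e : E}

lemma isCentralOn_iff_span_le_graph :
    IsCentralOn α a X ↔
      ∃ φ : Module.Dual R V, Submodule.span R (Function.prod α a '' X) ≤ φ.graph := by
  refine exists_congr fun φ => ?_
  rw [Submodule.span_le, Set.image_subset_iff]
  exact forall₂_congr fun e _ => eq_comm

lemma isCentralOn_congr_span
    (h : Submodule.span R (Function.prod α a '' X) = Submodule.span R (Function.prod α a '' Y)) :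
    IsCentralOn α a X ↔ IsCentralOn α a Y := by
  rw [isCentralOn_iff_span_le_graph, isCentralOn_iff_span_le_graph, h]

lemma linearIndepOn_of_prod (hX : IsCentralOn α a X) (h : LinearIndepOn R (Function.prod α a) X) :
    LinearIndepOn R α X := by
  obtain ⟨φ, hφ⟩ := hX
  refine LinearIndepOn.of_comp (LinearMap.id.prod φ) (h.congr fun e he => ?_)
  simp [hφ e he]

lemma mk_mem_span_image_prod_iff (hY : IsCentralOn α a Y) :
    (α e, a e) ∈ Submodule.span R (Function.prod α a '' Y) ↔
      α e ∈ Submodule.span R (α '' Y) ∧ IsCentralOn α a (insert e Y) := by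
  constructor
  · intro he
    constructor
    · have := Submodule.mem_map_of_mem (f := LinearMap.fst R V R) he
      rwa [Submodule.map_span, ← Set.image_comp] at this
    · refine (isCentralOn_congr_span ?_).2 hY
      rw [Set.image_insert_eq]
      exact Submodule.span_insert_eq_span he
  · rintro ⟨he, φ, hφ⟩
    have himage : Function.prod α a '' Y = LinearMap.id.prod φ '' (α '' Y) := by
      rw [← Set.image_comp]
      exact Set.image_congr fun f hf => by simp [hφ f (Or.inr hf)]
    rw [himage, ← Submodule.map_span]
    exact ⟨α e, he, by simp [hφ e (Or.inl rfl)]⟩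

lemma isCentralOn_of_linearIndepOn {F E V : Type*} [Field F] [AddCommGroup V] [Module F V]
    {α : E → V} {X : Set E} (a : E → F) (h : LinearIndepOn F α X) :
    IsCentralOn α a X := by
  obtain ⟨g, hg⟩ := LinearMap.exists_leftInverse_of_injective
    (Finsupp.linearCombination F fun e : X => α e) (LinearMap.ker_eq_bot.2 h)
  refine ⟨Finsupp.linearCombination F (fun e : X => a e) ∘ₗ g, fun e he => ?_⟩
  have hge : g (α e) = Finsupp.single ⟨e, he⟩ 1 := by
    simpa using LinearMap.congr_fun hg (Finsupp.single ⟨e, he⟩ 1)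
  simp [hge]

lemma aCentral_iff_isCentralOn {F E : Type*} [Field F] {n : ℕ} {α : E → Fin n → F} {a : E → F}
    {X : Finset E} : ACentral α a X ↔ IsCentralOn α a X := by
  rw [IsCentralOn, (dotProductEquiv F (Fin n)).surjective.exists]
  simp [ACentral, dotProduct, mul_comm]

end Central

section AffineNBC

open scoped symmDiff

variable {F E : Type*} [Field F] [LinearOrder E]

/-- The no-broken-circuit sets of the affine arrangement with normals `α` and offsets `a`. -/
def IsAffineNBC {V : Type*} [AddCommGroup V] [Module F V] (α : E → V) (a : E → F) (X : Set E) :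
    Prop :=
  IsCentralOn α a X ∧ IsNBC F (Function.prod α a) X

section VectorSpace

variable {V : Type*} [AddCommGroup V] [Module F V] {α : E → V} {a a' : E → F} {X : Set E}

lemma IsAffineNBC.linearIndepOn (hX : IsAffineNBC α a X) : LinearIndepOn F α X :=
  linearIndepOn_of_prod hX.1 hX.2.linearIndepOn

lemma IsAffineNBC.of_isCentralOn_imp (h : ∀ Y : Set E, IsCentralOn α a' Y → IsCentralOn α a Y)
    (hX : IsAffineNBC α a X) : IsAffineNBC α a' X := by
  refine ⟨isCentralOn_of_linearIndepOn a' hX.linearIndepOn, fun e he => hX.2 e ?_⟩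
  have hind : LinearIndepOn F α (X ∩ Set.Ioi e) :=
    hX.linearIndepOn.mono Set.inter_subset_left
  obtain ⟨hspan, hcentral⟩ :=
    (mk_mem_span_image_prod_iff (isCentralOn_of_linearIndepOn a' hind)).1 he
  exact (mk_mem_span_image_prod_iff (isCentralOn_of_linearIndepOn a hind)).2 ⟨hspan, h _ hcentral⟩

end VectorSpace

variable [Fintype E] {n : ℕ}

theorem arrCharPoly_eq_sum_isAffineNBC (α : E → Fin n → F) (a : E → F) :
    arrCharPoly α a =
      ∑ X ∈ {X : Finset E | IsAffineNBC α a (X : Set E)},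
        (-1 : Polynomial ℤ) ^ X.card * Polynomial.X ^ (n - X.card) := by
  let g (X : Finset E) : Polynomial ℤ :=
    if IsCentralOn α a X then
      (-1) ^ X.card *
        Polynomial.X ^ (n - Module.finrank F (Submodule.span F (Function.prod α a '' X)))
    else 0
  calc arrCharPoly α a = ∑ X, g X := by
        simp only [arrCharPoly, Finset.powerset_univ, aCentral_iff_isCentralOn, Finset.sum_filter]
        rfl
    _ = ∑ X ∈ {X : Finset E | IsNBC F (Function.prod α a) (X : Set E)}, g X := by
        refine sum_eq_sum_isNBC g fun X e he => ?_
        have hspan : Submodule.span F (Function.prod α a '' (X ∆ {e} : Finset E)) =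
            Submodule.span F (Function.prod α a '' X) := by
          simpa only [Finset.coe_symmDiff, Finset.coe_singleton] using he.span_symmDiff_singleton
        simp only [g, isCentralOn_congr_span hspan, neg_one_pow_card_symmDiff_singleton]
        rw [hspan]
        split_ifs <;> simp only [neg_mul, neg_zero]
    _ = ∑ X ∈ {X : Finset E | IsAffineNBC α a (X : Set E)},
          (-1) ^ X.card * Polynomial.X ^ (n - X.card) := by
        rw [← Finset.sum_filter, Finset.filter_filter]
        refine Finset.sum_congr (Finset.filter_congr fun X _ => and_comm) fun X hX => ?_
        have hnbc : IsAffineNBC α a X := (Finset.mem_filter_univ X).1 hX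
        rw [finrank_span_image_eq_card hnbc.2.linearIndepOn]

theorem arrWhitney_eq_card_isAffineNBC (α : E → Fin n → F) (a : E → F) {i : ℕ} (hi : i ≤ n) :
    arrWhitney α a i = Finset.card {X : Finset E | IsAffineNBC α a (X : Set E) ∧ X.card = i} := by
  have hcoeff (X : Finset E) (hX : IsAffineNBC α a X) :
      (-1) ^ i * ((-1 : Polynomial ℤ) ^ X.card * Polynomial.X ^ (n - X.card)).coeff (n - i) =
        if X.card = i then 1 else 0 := by
    have hcard : X.card ≤ n := by
      simpa using LinearIndependent.fintype_card_le_finrank hX.linearIndepOn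
    have hC : (-1 : Polynomial ℤ) ^ X.card = Polynomial.C ((-1 : ℤ) ^ X.card) := by simp
    have hexp : n - i = n - X.card ↔ X.card = i := by omega
    rw [hC, Polynomial.coeff_C_mul_X_pow]
    simp only [hexp, mul_ite, mul_zero]
    split_ifs with h
    · rw [h, ← mul_pow, neg_one_mul, neg_neg, one_pow]
    · rfl
  rw [arrWhitney, arrCharPoly_eq_sum_isAffineNBC, Polynomial.finsetSum_coeff, Finset.mul_sum,
    Finset.sum_congr rfl fun X hX => hcoeff X (Finset.mem_filter_univ X |>.1 hX),
    Finset.sum_boole, Finset.filter_filter]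

end AffineNBC

/-- If every `a'`-central subset is `a`-central, then
`w_i(𝒜_a) ≤ w_i(𝒜_{a'})` for all `0 ≤ i ≤ dim span{α_e : e ∈ E}`. -/
theorem arrWhitney_le_of_central_subset
    (F : Type*) [Field F] (E : Type*) [Fintype E] (n : ℕ) (hn : 0 < n)
    (α : E → (Fin n → F)) (a a' : E → F)
    (h : ∀ X : Finset E, ACentral α a' X → ACentral α a X)
    (i : ℕ) (hi : i ≤ Module.finrank F (Submodule.span F (Set.range α))) :
    arrWhitney α a i ≤ arrWhitney α a' i := by
  have hin : i ≤ n := hi.trans ((Submodule.finrank_le _).trans_eq (Module.finrank_fin_fun F))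
  let _ : LinearOrder E := LinearOrder.lift' (Fintype.equivFin E) (Fintype.equivFin E).injective
  have hcentral (X : Set E) (hX : IsCentralOn α a' X) : IsCentralOn α a X := by
    simpa only [aCentral_iff_isCentralOn, Set.coe_toFinset, hX, true_imp_iff] using h X.toFinset
  rw [arrWhitney_eq_card_isAffineNBC α a hin, arrWhitney_eq_card_isAffineNBC α a' hin, Nat.cast_le]
  exact Finset.card_le_card <|
    Finset.monotone_filter_right _ fun X _ hX => ⟨hX.1.of_isCentralOn_imp hcentral, hX.2⟩
end
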